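/- Let μ be the standard Gaussian measure on ℝⁿ, let Ω = {x ∈ ℝⁿ : g_j(x) ≥ 0, j = 1,…,m}, and assume both Ω and ℝⁿ ∖ Ω have nonempty interior. Let f ∈ ℝ[x] be a polynomial that is strictly positive almost everywhere on Ω. Then ō_d(f) → ∫_Ω f dμ as d → ∞; moreover, if for each d ≥ d₀ the pair (u^d, v^d) is an optimal solution of the semidefinite program defining ō_d(f), then u^d_0 → μ(Ω) as d → ∞. In particular, for f = 1 the sequence (ō_d(1)) is monotone non-increasing and converges to μ(Ω). -/

import Mathlib

open MeasureTheory MvPolynomial Filter Topology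

noncomputable def gaussianMeasure (n : ℕ) : Measure (Fin n → ℝ) :=
  volume.withDensity fun x =>
    ENNReal.ofReal ((2 * Real.pi) ^ (-(n : ℝ) / 2) * Real.exp (-(∑ i, x i ^ 2) / 2))

noncomputable def expMeasure (n : ℕ) : Measure (Fin n → ℝ) :=
  (volume.restrict {x : Fin n → ℝ | ∀ i, 0 ≤ x i}).withDensity fun x =>
    ENNReal.ofReal (Real.exp (-(∑ i, x i)))

/-- degree |α| of a multi-index -/
def fdeg {n : ℕ} (α : Fin n →₀ ℕ) : ℕ := α.sum fun _ e => e

/-- Riesz functional `L_u(p)` of a (pseudo-)moment sequence `u`. -/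
noncomputable def riesz {n : ℕ} (u : (Fin n →₀ ℕ) → ℝ) (p : MvPolynomial (Fin n) ℝ) : ℝ :=
  ∑ α ∈ p.support, p.coeff α * u α

/-- Positive semidefiniteness of the moment matrix `M_d(u)`, expressed via its
quadratic form: `L_u(p²) ≥ 0` for all polynomials of degree at most `d`. -/
def MomPSD {n : ℕ} (d : ℕ) (u : (Fin n →₀ ℕ) → ℝ) : Prop :=
  ∀ p : MvPolynomial (Fin n) ℝ, p.totalDegree ≤ d → 0 ≤ riesz u (p ^ 2)

/-- Positive semidefiniteness of the localizing matrix `M_k(g u)`, expressed via its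
quadratic form: `L_u(g·p²) ≥ 0` for all polynomials of degree at most `k`. -/
def LocPSD {n : ℕ} (k : ℕ) (g : MvPolynomial (Fin n) ℝ) (u : (Fin n →₀ ℕ) → ℝ) : Prop :=
  ∀ p : MvPolynomial (Fin n) ℝ, p.totalDegree ≤ k → 0 ≤ riesz u (g * p ^ 2)

/-- moments of the standard Gaussian measure -/
noncomputable def gmom (n : ℕ) (α : Fin n →₀ ℕ) : ℝ :=
  ∫ x, (∏ i, x i ^ α i) ∂gaussianMeasure n

/-- `d_j = ⌈deg g / 2⌉` -/
def dHalf {n : ℕ} (g : MvPolynomial (Fin n) ℝ) : ℕ := (g.totalDegree + 1) / 2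

/-- the basic closed semi-algebraic set determined by the polynomials `g_j` -/
def semialg {n m : ℕ} (g : Fin m → MvPolynomial (Fin n) ℝ) : Set (Fin n → ℝ) :=
  {x | ∀ j, 0 ≤ eval x (g j)}

/-- feasibility for the primal semidefinite relaxation of order `d` (Gaussian measure) -/
def Feasible {n m : ℕ} (g : Fin m → MvPolynomial (Fin n) ℝ) (d : ℕ)
    (u v : (Fin n →₀ ℕ) → ℝ) : Prop :=
  (∀ α : Fin n →₀ ℕ, fdeg α ≤ 2 * d → u α + v α = gmom n α) ∧
  MomPSD d u ∧ MomPSD d v ∧ ∀ j, LocPSD (d - dHalf (g j)) (g j) u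

/-- the value `ō_d(f)` of the primal semidefinite relaxation of order `d` -/
noncomputable def obar {n m : ℕ} (g : Fin m → MvPolynomial (Fin n) ℝ) (d : ℕ)
    (f : MvPolynomial (Fin n) ℝ) : ℝ :=
  sSup {r | ∃ u v, Feasible g d u v ∧ r = riesz u f}

/-- the Stokes polynomial `p_{i,α} = ∂(x^α f)/∂x_i − x_i · x^α f` (Gaussian case) -/
noncomputable def pStokesG {n : ℕ} (f : MvPolynomial (Fin n) ℝ) (i : Fin n) (α : Fin n →₀ ℕ) :
    MvPolynomial (Fin n) ℝ :=
  pderiv i (monomial α 1 * f) - X i * (monomial α 1 * f)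

/-- the Stokes polynomial `p_{i,α} = ∂(x^α f)/∂x_i − x^α f` (exponential case) -/
noncomputable def pStokesE {n : ℕ} (f : MvPolynomial (Fin n) ℝ) (i : Fin n) (α : Fin n →₀ ℕ) :
    MvPolynomial (Fin n) ℝ :=
  pderiv i (monomial α 1 * f) - monomial α 1 * f

/-- feasibility for the Stokes-augmented semidefinite relaxation of order `d` -/
def FeasibleS {n m : ℕ} (g : Fin m → MvPolynomial (Fin n) ℝ) (f : MvPolynomial (Fin n) ℝ)
    (d : ℕ) (u v : (Fin n →₀ ℕ) → ℝ) : Prop :=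
  Feasible g d u v ∧
  ∀ (i : Fin n) (α : Fin n →₀ ℕ), (pStokesG f i α).totalDegree ≤ 2 * d →
    riesz u (pStokesG f i α) = 0

/-- the value `ω̄_d` of the Stokes-augmented semidefinite relaxation of order `d` -/
noncomputable def omegabar {n m : ℕ} (g : Fin m → MvPolynomial (Fin n) ℝ)
    (f : MvPolynomial (Fin n) ℝ) (d : ℕ) : ℝ :=
  sSup {r | ∃ u v, FeasibleS g f d u v ∧ r = u 0}

/-- `p ∈ Σ[x]_d`: `p` is a sum of squares of polynomials of degree at most `d` -/
def IsSOS {n : ℕ} (d : ℕ) (p : MvPolynomial (Fin n) ℝ) : Prop :=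
  ∃ (k : ℕ) (q : Fin k → MvPolynomial (Fin n) ℝ),
    (∀ i, (q i).totalDegree ≤ d) ∧ p = ∑ i, q i ^ 2

/-- membership in the truncated quadratic module `Q_{2d}(Ω)` -/
def InQM {n m : ℕ} (g : Fin m → MvPolynomial (Fin n) ℝ) (d : ℕ)
    (p : MvPolynomial (Fin n) ℝ) : Prop :=
  ∃ (σ₀ : MvPolynomial (Fin n) ℝ) (σ : Fin m → MvPolynomial (Fin n) ℝ),
    IsSOS d σ₀ ∧ (∀ j, IsSOS (d - dHalf (g j)) (σ j)) ∧ p = σ₀ + ∑ j, σ j * g j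

/-!
A pointwise limit `L` of the Riesz functionals of feasible sequences satisfies
`0 ≤ L(p²) ≤ ∫ p² dρ`, so it is bounded in the `L²(ρ)`-norm. Exponential moments of `ρ` make
polynomials dense in `L²(ρ)`, because measures with exponential moments are moment determinate.
Hence `L` is integration against some `w ∈ L²(ρ)`, and testing against squares, weighted by `g_j`
or not, gives `0 ≤ w ≤ 1_Ω`. The moments of `ρ` restricted to `Ω` are feasible, so near-optimality
yields `∫ w f dρ ≥ ∫_Ω f dρ`, and positivity of `f` forces `w = 1_Ω`. As every ultrafilter limit
is the same, the sequences converge.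
-/

section MomentDeterminacy

open ProbabilityTheory

variable {Ω Ω' : Type*} [MeasurableSpace Ω] [MeasurableSpace Ω'] {μ : Measure Ω} {ν : Measure Ω'}
  {X : Ω → ℝ} {Y : Ω' → ℝ}

lemma complexMGF_eventuallyEq_of_moments_eq (hX : 0 ∈ interior (integrableExpSet X μ))
    (hY : 0 ∈ interior (integrableExpSet Y ν)) (h : ∀ k : ℕ, ∫ ω, X ω ^ k ∂μ = ∫ ω, Y ω ^ k ∂ν) :
    complexMGF X μ =ᶠ[𝓝 0] complexMGF Y ν := by
  have hderiv (k : ℕ) :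
      iteratedDeriv k (complexMGF X μ) 0 = iteratedDeriv k (complexMGF Y ν) 0 := by
    rw [iteratedDeriv_complexMGF (by simpa using hX), iteratedDeriv_complexMGF (by simpa using hY)]
    simpa [← Complex.ofReal_pow, integral_complex_ofReal] using h k
  have hXseries := (analyticAt_complexMGF (z := 0) (by simpa using hX)).hasFPowerSeriesAt
  have hYseries := (analyticAt_complexMGF (z := 0) (by simpa using hY)).hasFPowerSeriesAt
  simp only [hderiv] at hXseries
  have hsub := hXseries.sub hYseries
  rw [sub_self] at hsub
  filter_upwards [hsub.eventually_eq_zero] with z hz using sub_eq_zero.1 hz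

-- The moments are the Taylor coefficients at `0` of the complex moment-generating function, which
-- is analytic on a vertical strip containing the imaginary axis, where it is the characteristic
-- function.
theorem map_eq_map_of_moments_eq [IsFiniteMeasure μ] [IsFiniteMeasure ν]
    (hX : 0 ∈ interior (integrableExpSet X μ)) (hY : 0 ∈ interior (integrableExpSet Y ν))
    (h : ∀ k : ℕ, ∫ ω, X ω ^ k ∂μ = ∫ ω, Y ω ^ k ∂ν) : μ.map X = ν.map Y := by
  set J := interior (integrableExpSet X μ) ∩ interior (integrableExpSet Y ν)
  have hstrip : Set.EqOn (complexMGF X μ) (complexMGF Y ν) {z | z.re ∈ J} :=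
    (analyticOnNhd_complexMGF.mono fun _ hz => hz.1).eqOn_of_preconnected_of_eventuallyEq
      (analyticOnNhd_complexMGF.mono fun _ hz => hz.2)
      ((convex_integrableExpSet.interior.inter convex_integrableExpSet.interior).linear_preimage
        Complex.reLm).isPreconnected
      (z₀ := 0) (by simpa using ⟨hX, hY⟩) (complexMGF_eventuallyEq_of_moments_eq hX hY h)
  refine Measure.ext_of_charFun (funext fun t => ?_)
  rw [← complexMGF_mul_I (aemeasurable_of_mem_interior_integrableExpSet hX),
    ← complexMGF_mul_I (aemeasurable_of_mem_interior_integrableExpSet hY)]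
  exact hstrip (by simpa using ⟨hX, hY⟩)

end MomentDeterminacy

lemma integral_withDensity_ofReal {E : Type*} [MeasurableSpace E] {ρ : Measure E} {w : E → ℝ}
    (hw : AEMeasurable w ρ) (φ : E → ℝ) :
    ∫ x, φ x ∂ρ.withDensity (fun x => ENNReal.ofReal (w x)) = ∫ x, max (w x) 0 * φ x ∂ρ := by
  simp [integral_withDensity_eq_integral_toReal_smul₀ hw.ennreal_ofReal, ENNReal.toReal_ofReal']

lemma eLpNorm_two_le_of_integral_sq_le {α β : Type*} [MeasurableSpace α] [MeasurableSpace β]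
    {μ : Measure α} {ν : Measure β} {φ : α → ℝ} {ψ : β → ℝ} (hφ : MemLp φ 2 μ) (hψ : MemLp ψ 2 ν)
    (h : ∫ x, φ x ^ 2 ∂μ ≤ ∫ x, ψ x ^ 2 ∂ν) : eLpNorm φ 2 μ ≤ eLpNorm ψ 2 ν := by
  rw [hφ.eLpNorm_eq_integral_rpow_norm (by simp) (by simp),
    hψ.eLpNorm_eq_integral_rpow_norm (by simp) (by simp)]
  gcongr
  simpa using h

lemma ae_eq_indicator_one_of_setIntegral_le {E : Type*} [MeasurableSpace E] {ρ : Measure E}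
    {S : Set E} {w φ : E → ℝ} (hS : MeasurableSet S) (hwφ : Integrable (fun x => w x * φ x) ρ)
    (hφ : IntegrableOn φ S ρ) (hw : ∀ᵐ x ∂ρ, w x ∈ Set.Icc 0 (S.indicator 1 x))
    (hφ_pos : ∀ᵐ x ∂ρ.restrict S, 0 < φ x) (h : ∫ x in S, φ x ∂ρ ≤ ∫ x, w x * φ x ∂ρ) :
    w =ᵐ[ρ] S.indicator 1 := by
  rw [ae_restrict_iff' hS] at hφ_pos
  have hle : (fun x => w x * φ x) ≤ᵐ[ρ] S.indicator φ := by
    filter_upwards [hw, hφ_pos] with x hx hpos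
    by_cases hxS : x ∈ S
    · simp only [Set.indicator_of_mem hxS, Pi.one_apply] at hx ⊢
      exact mul_le_of_le_one_left (hpos hxS).le hx.2
    · simp only [Set.indicator_of_notMem hxS] at hx ⊢
      rw [le_antisymm hx.2 hx.1, zero_mul]
  have hφ_ind : Integrable (S.indicator φ) ρ := hφ.integrable_indicator hS
  rw [← integral_indicator hS] at h
  have heq := (integral_eq_iff_of_ae_le hwφ hφ_ind hle).1
    (le_antisymm (integral_mono_ae hwφ hφ_ind hle) h)
  filter_upwards [hw, hφ_pos, heq] with x hx hpos hx_eq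
  by_cases hxS : x ∈ S
  · simp only [Set.indicator_of_mem hxS, Pi.one_apply] at hx_eq ⊢
    exact (mul_eq_right₀ (hpos hxS).ne').1 hx_eq
  · simp only [Set.indicator_of_notMem hxS] at hx ⊢
    exact le_antisymm hx.2 hx.1

lemma sq_apply_le_of_sq_nonneg {A : Type*} [CommRing A] [Algebra ℝ A] (L : A →ₗ[ℝ] ℝ)
    (hL : ∀ a, 0 ≤ L (a ^ 2)) (a : A) : L a ^ 2 ≤ L 1 * L (a ^ 2) := by
  have hcs := LinearMap.BilinForm.apply_sq_le_of_symm ((LinearMap.mul ℝ A).compr₂ L)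
    (fun b => by simpa [sq] using hL b) ⟨fun b c => by simp [mul_comm]⟩ 1 a
  simpa [sq] using hcs

lemma exists_eval_eq_strongDual {σ : Type*} [Finite σ] (L : StrongDual ℝ (σ → ℝ)) :
    ∃ p : MvPolynomial σ ℝ, ∀ x, eval x p = L x := by
  classical
  have := Fintype.ofFinite σ
  refine ⟨∑ i, C (L (Pi.single i 1)) * X i, fun x => ?_⟩
  conv_rhs => rw [pi_eq_sum_univ' x]
  simp [mul_comm]

/-- `ρ` integrates `exp (c * ‖x‖)` for some rate `c > 0`, which is what makes the polynomials dense
in `L²(ρ)`. -/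
def HasExpMoment {E : Type*} [NormedAddCommGroup E] [MeasurableSpace E] (ρ : Measure E) : Prop :=
  ∃ c > 0, Integrable (fun x => Real.exp (c * ‖x‖)) ρ

namespace HasExpMoment

section NormedSpace

variable {E : Type*} [NormedAddCommGroup E] [MeasurableSpace E] {ρ μ ν : Measure E}

lemma restrict (hρ : HasExpMoment ρ) (s : Set E) : HasExpMoment (ρ.restrict s) :=
  hρ.imp fun _ h => ⟨h.1, h.2.restrict⟩

lemma add_measure [BorelSpace E] (hμ : HasExpMoment μ) (hν : HasExpMoment ν) :
    HasExpMoment (μ + ν) := by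
  obtain ⟨c, hc, hμ⟩ := hμ
  obtain ⟨e, he, hν⟩ := hν
  refine ⟨min c e, lt_min hc he, .add_measure (hμ.mono' ?_ ?_) (hν.mono' ?_ ?_)⟩
  any_goals fun_prop
  all_goals
    refine .of_forall fun x => ?_
    rw [Real.norm_eq_abs, Real.abs_exp]
    gcongr
  exacts [min_le_left c e, min_le_right c e]

lemma isFiniteMeasure (hρ : HasExpMoment ρ) : IsFiniteMeasure ρ := by
  obtain ⟨c, hc, hint⟩ := hρ
  have hone : Integrable (fun _ : E => (1 : ℝ)) ρ :=
    hint.mono' aestronglyMeasurable_const (.of_forall fun x => by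
      simpa using mul_nonneg hc.le (norm_nonneg x))
  simpa [integrable_const_iff] using hone

lemma integrable_norm_pow [BorelSpace E] (hρ : HasExpMoment ρ) (k : ℕ) :
    Integrable (fun x => ‖x‖ ^ k) ρ := by
  obtain ⟨c, hc, hint⟩ := hρ
  refine (hint.const_mul (k.factorial / c ^ k)).mono' (by fun_prop) (.of_forall fun x => ?_)
  have hexp := Real.pow_div_factorial_le_exp _ (mul_nonneg hc.le (norm_nonneg x)) k
  rw [div_le_iff₀ (by positivity), mul_pow] at hexp
  rw [norm_pow, norm_norm, div_mul_eq_mul_div, le_div_iff₀ (by positivity)]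
  linarith

lemma zero_mem_interior_integrableExpSet [NormedSpace ℝ E] [BorelSpace E] (hρ : HasExpMoment ρ)
    (L : StrongDual ℝ E) : 0 ∈ interior (ProbabilityTheory.integrableExpSet L ρ) := by
  obtain ⟨c, hc, hint⟩ := hρ
  have hsmall : ∀ᶠ t : ℝ in 𝓝 0, |t| * ‖L‖ < c :=
    (Continuous.tendsto' (by fun_prop) 0 0 (by simp)).eventually_lt_const hc
  rw [mem_interior_iff_mem_nhds]
  filter_upwards [hsmall] with t ht
  refine hint.mono' (by fun_prop) (.of_forall fun x => ?_)
  rw [Real.norm_eq_abs, Real.abs_exp, Real.exp_le_exp]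
  calc t * L x ≤ |t| * (‖L‖ * ‖x‖) := by
        refine (le_abs_self _).trans ?_
        rw [abs_mul]
        gcongr
        exact L.le_opNorm x
    _ ≤ c * ‖x‖ := by rw [← mul_assoc]; gcongr

lemma withDensity_ofReal [BorelSpace E] (hρ : HasExpMoment ρ) {w : E → ℝ} (hw : MemLp w 2 ρ) :
    HasExpMoment (ρ.withDensity fun x => ENNReal.ofReal (w x)) := by
  obtain ⟨c, hc, hint⟩ := hρ
  have hexp : MemLp (fun x => Real.exp (c / 2 * ‖x‖)) 2 ρ := by
    rw [memLp_two_iff_integrable_sq (by fun_prop)]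
    convert! hint using 2 with x
    rw [← Real.exp_nat_mul]
    ring_nf
  refine ⟨c / 2, half_pos hc, ?_⟩
  rw [integrable_withDensity_iff_integrable_smul₀' hw.1.aemeasurable.ennreal_ofReal (by simp)]
  simpa [ENNReal.toReal_ofReal'] using! hw.pos_part.integrable_mul hexp

end NormedSpace

section Polynomial

variable {σ : Type*} [Fintype σ] {ρ μ ν : Measure (σ → ℝ)}

lemma integrable_prod_pow (hρ : HasExpMoment ρ) (α : σ →₀ ℕ) :
    Integrable (fun x => ∏ i, x i ^ α i) ρ := by
  refine (hρ.integrable_norm_pow (∑ i, α i)).mono'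
    (by fun_prop : Continuous fun x : σ → ℝ => ∏ i, x i ^ α i).aestronglyMeasurable
    (.of_forall fun x => ?_)
  rw [norm_prod, ← Finset.prod_pow_eq_pow_sum]
  gcongr with i
  rw [norm_pow]
  gcongr
  exact norm_le_pi_norm x i

lemma integrable_eval (hρ : HasExpMoment ρ) (p : MvPolynomial σ ℝ) :
    Integrable (fun x => eval x p) ρ := by
  simp only [eval_eq']
  exact integrable_finsetSum _ fun α _ => (hρ.integrable_prod_pow α).const_mul _

lemma memLp_eval (hρ : HasExpMoment ρ) (p : MvPolynomial σ ℝ) :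
    MemLp (fun x => eval x p) 2 ρ := by
  rw [memLp_two_iff_integrable_sq (continuous_eval p).aestronglyMeasurable]
  exact (hρ.integrable_eval (p ^ 2)).congr (.of_forall fun x => map_pow (eval x) p 2)

theorem ext_of_integral_eval_eq (hμ : HasExpMoment μ) (hν : HasExpMoment ν)
    (h : ∀ p : MvPolynomial σ ℝ, ∫ x, eval x p ∂μ = ∫ x, eval x p ∂ν) : μ = ν := by
  have := hμ.isFiniteMeasure
  have := hν.isFiniteMeasure
  refine Measure.ext_of_charFunDual (funext fun L => ?_)
  obtain ⟨p, hp⟩ := exists_eval_eq_strongDual L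
  have hmap : μ.map L = ν.map L := by
    refine map_eq_map_of_moments_eq (hμ.zero_mem_interior_integrableExpSet L)
      (hν.zero_mem_interior_integrableExpSet L) fun k => ?_
    simpa only [map_pow, hp] using h (p ^ k)
  rw [charFunDual_eq_charFun_map_one, charFunDual_eq_charFun_map_one, hmap]

theorem ae_eq_zero_of_integral_mul_eval_eq_zero (hρ : HasExpMoment ρ) {w : (σ → ℝ) → ℝ}
    (hw : MemLp w 2 ρ) (h : ∀ p : MvPolynomial σ ℝ, ∫ x, w x * eval x p ∂ρ = 0) :
    w =ᵐ[ρ] 0 := by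
  have := hρ.isFiniteMeasure
  have hparts : ρ.withDensity (fun x => ENNReal.ofReal (w x)) =
      ρ.withDensity (fun x => ENNReal.ofReal ((-w) x)) := by
    refine (hρ.withDensity_ofReal hw).ext_of_integral_eval_eq (hρ.withDensity_ofReal hw.neg)
      fun p => sub_eq_zero.1 ?_
    have hpos : Integrable (fun x => max (w x) 0 * eval x p) ρ :=
      hw.pos_part.integrable_mul (hρ.memLp_eval p)
    have hneg : Integrable (fun x => max ((-w) x) 0 * eval x p) ρ :=
      hw.neg_part.integrable_mul (hρ.memLp_eval p)
    rw [integral_withDensity_ofReal hw.1.aemeasurable,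
      integral_withDensity_ofReal hw.neg.1.aemeasurable, ← integral_sub hpos hneg]
    simpa only [← sub_mul, Pi.neg_apply, max_zero_sub_max_neg_zero_eq_self] using h p
  rw [withDensity_eq_iff_of_sigmaFinite hw.1.aemeasurable.ennreal_ofReal
    hw.neg.1.aemeasurable.ennreal_ofReal] at hparts
  filter_upwards [hparts] with x hx
  have hmax : max (w x) 0 = max (-w x) 0 := by
    simpa [ENNReal.toReal_ofReal'] using congrArg ENNReal.toReal hx
  rw [Pi.zero_apply, ← max_zero_sub_max_neg_zero_eq_self (w x), hmax, sub_self]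

/-- The class in `L²(ρ)` of the function defined by a polynomial. -/
noncomputable def evalL2 (hρ : HasExpMoment ρ) : MvPolynomial σ ℝ →ₗ[ℝ] Lp ℝ 2 ρ where
  toFun p := (hρ.memLp_eval p).toLp
  map_add' p q := by simp only [map_add]; rfl
  map_smul' c p := by simp only [smul_eval]; rfl

lemma inner_evalL2 (hρ : HasExpMoment ρ) (w : Lp ℝ 2 ρ) (p : MvPolynomial σ ℝ) :
    inner ℝ w (hρ.evalL2 p) = ∫ x, w x * eval x p ∂ρ := by
  rw [L2.inner_def]
  refine integral_congr_ae ?_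
  filter_upwards [(hρ.memLp_eval p).coeFn_toLp] with x hx
  simp only [evalL2, LinearMap.coe_mk, AddHom.coe_mk, hx, RCLike.inner_apply, conj_trivial,
    mul_comm]

lemma norm_evalL2 (hρ : HasExpMoment ρ) (p : MvPolynomial σ ℝ) :
    ‖hρ.evalL2 p‖ = √(∫ x, eval x p ^ 2 ∂ρ) := by
  rw [norm_eq_sqrt_real_inner, inner_evalL2]
  congr 1
  refine integral_congr_ae ?_
  filter_upwards [(hρ.memLp_eval p).coeFn_toLp] with x hx
  rw [sq]
  exact congrArg (· * eval x p) hx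

lemma denseRange_evalL2 (hρ : HasExpMoment ρ) : DenseRange hρ.evalL2 := by
  have horth : (LinearMap.range hρ.evalL2)ᗮ = ⊥ := by
    refine (Submodule.eq_bot_iff _).2 fun w hw => (Lp.eq_zero_iff_ae_eq_zero).2 ?_
    refine hρ.ae_eq_zero_of_integral_mul_eval_eq_zero (Lp.memLp w) fun p => ?_
    rw [← hρ.inner_evalL2]
    exact (Submodule.mem_orthogonal' _ _).1 hw _ ⟨p, rfl⟩
  rw [← Submodule.topologicalClosure_eq_top_iff,
    ← Submodule.dense_iff_topologicalClosure_eq_top] at horth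
  rwa [LinearMap.coe_range] at horth

lemma exists_eLpNorm_sub_eval_lt (hρ : HasExpMoment ρ) {φ : (σ → ℝ) → ℝ} (hφ : MemLp φ 2 ρ)
    {ε : ENNReal} (hε : 0 < ε) :
    ∃ p : MvPolynomial σ ℝ, eLpNorm (φ - fun x => eval x p) 2 ρ < ε := by
  obtain ⟨p, hp⟩ := hρ.denseRange_evalL2.exists_mem_open Metric.isOpen_eball
    ⟨hφ.toLp φ, Metric.mem_eball_self hε⟩
  refine ⟨p, ?_⟩
  rwa [Metric.mem_eball', evalL2, LinearMap.coe_mk, AddHom.coe_mk, Lp.edist_toLp_toLp] at hp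

theorem le_of_integral_sq_le (hμ : HasExpMoment μ) (hν : HasExpMoment ν)
    (h : ∀ p : MvPolynomial σ ℝ, ∫ x, eval x (p ^ 2) ∂μ ≤ ∫ x, eval x (p ^ 2) ∂ν) : μ ≤ ν := by
  have := hμ.isFiniteMeasure
  have := hν.isFiniteMeasure
  refine Measure.le_intro fun S hS _ => ?_
  set φ : (σ → ℝ) → ℝ := S.indicator fun _ => 1 with hφ_def
  have hφ (κ : Measure (σ → ℝ)) [IsFiniteMeasure κ] : MemLp φ 2 κ :=
    memLp_indicator_const 2 hS 1 (.inr (measure_ne_top κ S))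
  have hφ_norm (κ : Measure (σ → ℝ)) : eLpNorm φ 2 κ = κ S ^ (1 / 2 : ℝ) := by
    simp [hφ_def, eLpNorm_indicator_const hS]
  suffices eLpNorm φ 2 μ ≤ eLpNorm φ 2 ν by
    rwa [hφ_norm, hφ_norm, ENNReal.rpow_le_rpow_iff (by norm_num)] at this
  refine ENNReal.le_of_forall_pos_le_add fun ε hε _ => ?_
  obtain ⟨p, hp⟩ := (hμ.add_measure hν).exists_eLpNorm_sub_eval_lt (hφ (μ + ν))
    (ε := ε / 2) (by simpa using hε.ne')
  have hpμ := (eLpNorm_mono_measure _ (Measure.le_add_right le_rfl)).trans hp.le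
  have hpν := (eLpNorm_mono_measure _ (Measure.le_add_left le_rfl)).trans hp.le
  set ψ : (σ → ℝ) → ℝ := fun x => eval x p
  calc eLpNorm φ 2 μ = eLpNorm ((φ - ψ) + ψ) 2 μ := by rw [sub_add_cancel]
    _ ≤ eLpNorm (φ - ψ) 2 μ + eLpNorm ψ 2 μ :=
        eLpNorm_add_le ((hφ μ).sub (hμ.memLp_eval p)).1 (hμ.memLp_eval p).1 one_le_two
    _ ≤ eLpNorm (φ - ψ) 2 μ + eLpNorm ψ 2 ν := by
        refine add_le_add_right (eLpNorm_two_le_of_integral_sq_le (hμ.memLp_eval p)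
          (hν.memLp_eval p) ?_) _
        simpa only [map_pow] using h p
    _ = eLpNorm (φ - ψ) 2 μ + eLpNorm (φ - (φ - ψ)) 2 ν := by rw [sub_sub_cancel]
    _ ≤ eLpNorm (φ - ψ) 2 μ + (eLpNorm φ 2 ν + eLpNorm (φ - ψ) 2 ν) := by
        gcongr
        exact eLpNorm_sub_le (hφ ν).1 ((hφ ν).sub (hν.memLp_eval p)).1 one_le_two
    _ ≤ ε / 2 + (eLpNorm φ 2 ν + ε / 2) := by gcongr
    _ = eLpNorm φ 2 ν + ε := by rw [add_left_comm, ENNReal.add_halves]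

theorem ae_nonneg_of_integral_mul_sq_nonneg (hρ : HasExpMoment ρ) {h : (σ → ℝ) → ℝ}
    (hh : MemLp h 2 ρ) (hsq : ∀ p : MvPolynomial σ ℝ, 0 ≤ ∫ x, h x * eval x (p ^ 2) ∂ρ) :
    0 ≤ᵐ[ρ] h := by
  have := hρ.isFiniteMeasure
  have hparts : ρ.withDensity (fun x => ENNReal.ofReal ((-h) x)) ≤
      ρ.withDensity (fun x => ENNReal.ofReal (h x)) := by
    refine (hρ.withDensity_ofReal hh.neg).le_of_integral_sq_le (hρ.withDensity_ofReal hh)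
      fun p => sub_nonneg.1 ?_
    have hpos : Integrable (fun x => max (h x) 0 * eval x (p ^ 2)) ρ :=
      hh.pos_part.integrable_mul (hρ.memLp_eval (p ^ 2))
    have hneg : Integrable (fun x => max ((-h) x) 0 * eval x (p ^ 2)) ρ :=
      hh.neg_part.integrable_mul (hρ.memLp_eval (p ^ 2))
    rw [integral_withDensity_ofReal hh.1.aemeasurable,
      integral_withDensity_ofReal hh.neg.1.aemeasurable, ← integral_sub hpos hneg]
    simpa only [← sub_mul, Pi.neg_apply, max_zero_sub_max_neg_zero_eq_self] using hsq p
  have hle : (fun x => ENNReal.ofReal ((-h) x)) ≤ᵐ[ρ] fun x => ENNReal.ofReal (h x) :=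
    ae_le_of_forall_setLIntegral_le_of_sigmaFinite₀ hh.neg.1.aemeasurable.ennreal_ofReal
      fun S hS _ => by simpa only [withDensity_apply _ hS] using hparts S
  filter_upwards [hle] with x hx
  by_contra! hneg
  have hpos : 0 < -h x := by simpa using hneg
  exact (ENNReal.ofReal_pos.2 hpos).not_ge (hx.trans_eq (ENNReal.ofReal_of_nonpos hneg.le))

lemma exists_integral_mul_eval_eq (hρ : HasExpMoment ρ) (L : MvPolynomial σ ℝ →ₗ[ℝ] ℝ) {K : ℝ}
    (hL : ∀ p, |L p| ≤ K * √(∫ x, eval x p ^ 2 ∂ρ)) :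
    ∃ w : (σ → ℝ) → ℝ, MemLp w 2 ρ ∧ ∀ p, L p = ∫ x, w x * eval x p ∂ρ := by
  have hbound : ∃ K, ∀ p, ‖L p‖ ≤ K * ‖hρ.evalL2 p‖ :=
    ⟨K, fun p => by simpa only [norm_evalL2, Real.norm_eq_abs] using hL p⟩
  let w := (InnerProductSpace.toDual ℝ (Lp ℝ 2 ρ)).symm (L.extendOfNorm hρ.evalL2)
  refine ⟨w, Lp.memLp w, fun p => ?_⟩
  rw [← hρ.inner_evalL2, InnerProductSpace.toDual_symm_apply,
    LinearMap.extendOfNorm_eq hρ.denseRange_evalL2 hbound]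

theorem exists_density (hρ : HasExpMoment ρ) (L : MvPolynomial σ ℝ →ₗ[ℝ] ℝ)
    (hpos : ∀ p, 0 ≤ L (p ^ 2)) (hle : ∀ p, L (p ^ 2) ≤ ∫ x, eval x (p ^ 2) ∂ρ) :
    ∃ w : (σ → ℝ) → ℝ, MemLp w 2 ρ ∧ (∀ᵐ x ∂ρ, w x ∈ Set.Icc 0 1) ∧
      ∀ p, L p = ∫ x, w x * eval x p ∂ρ := by
  have hbound (p : MvPolynomial σ ℝ) : |L p| ≤ √(L 1) * √(∫ x, eval x p ^ 2 ∂ρ) := by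
    have hone : 0 ≤ L 1 := by simpa using hpos 1
    rw [← Real.sqrt_mul hone]
    refine Real.abs_le_sqrt ((sq_apply_le_of_sq_nonneg L hpos p).trans ?_)
    gcongr
    simpa only [map_pow] using hle p
  obtain ⟨w, hw, hLw⟩ := hρ.exists_integral_mul_eval_eq L hbound
  have := hρ.isFiniteMeasure
  have hw_nonneg : 0 ≤ᵐ[ρ] w :=
    hρ.ae_nonneg_of_integral_mul_sq_nonneg hw fun p => hLw (p ^ 2) ▸ hpos p
  have hw_le : 0 ≤ᵐ[ρ] (fun _ => 1) - w := by
    refine hρ.ae_nonneg_of_integral_mul_sq_nonneg ((memLp_const 1).sub hw) fun p => ?_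
    have hint : Integrable (fun x => w x * eval x (p ^ 2)) ρ :=
      hw.integrable_mul (hρ.memLp_eval (p ^ 2))
    simp only [Pi.sub_apply, sub_mul, one_mul]
    rw [integral_sub (hρ.integrable_eval _) hint, ← hLw]
    exact sub_nonneg.2 (hle p)
  refine ⟨w, hw, ?_, hLw⟩
  filter_upwards [hw_nonneg, hw_le] with x h0 h1 using ⟨h0, sub_nonneg.1 h1⟩

lemma ae_eval_nonneg_of_density_ne_zero (hρ : HasExpMoment ρ) {w : (σ → ℝ) → ℝ}
    (hw : MemLp w 2 ρ) (hw_mem : ∀ᵐ x ∂ρ, w x ∈ Set.Icc 0 1) {q : MvPolynomial σ ℝ}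
    (hq : ∀ p : MvPolynomial σ ℝ, 0 ≤ ∫ x, w x * eval x (q * p ^ 2) ∂ρ) :
    ∀ᵐ x ∂ρ, w x ≠ 0 → 0 ≤ eval x q := by
  have hmem : MemLp (fun x => w x * eval x q) 2 ρ := by
    refine (hρ.memLp_eval q).mono (hw.1.mul (continuous_eval q).aestronglyMeasurable) ?_
    filter_upwards [hw_mem] with x hx
    rw [norm_mul, Real.norm_of_nonneg hx.1]
    exact mul_le_of_le_one_left (norm_nonneg _) hx.2
  have hprod : 0 ≤ᵐ[ρ] fun x => w x * eval x q :=
    hρ.ae_nonneg_of_integral_mul_sq_nonneg hmem fun p => by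
      simpa only [map_mul, mul_assoc] using hq p
  filter_upwards [hw_mem, hprod] with x hx hprod hne
  exact nonneg_of_mul_nonneg_right hprod (hx.1.lt_of_ne' hne)

end Polynomial

end HasExpMoment

section Relaxation

variable {n m : ℕ} {ρ : Measure (Fin n → ℝ)} {g : Fin m → MvPolynomial (Fin n) ℝ} {d e : ℕ}
  {u v : (Fin n →₀ ℕ) → ℝ}

/-- The Riesz functional `riesz u` as a linear map. -/
noncomputable def rieszLinear (u : (Fin n →₀ ℕ) → ℝ) : MvPolynomial (Fin n) ℝ →ₗ[ℝ] ℝ :=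
  (basisMonomials (Fin n) ℝ).constr ℝ u

lemma rieszLinear_apply (u : (Fin n →₀ ℕ) → ℝ) (p : MvPolynomial (Fin n) ℝ) :
    rieszLinear u p = riesz u p := by
  rw [rieszLinear, Module.Basis.constr_apply]
  rfl

lemma riesz_monomial (u : (Fin n →₀ ℕ) → ℝ) (α : Fin n →₀ ℕ) : riesz u (monomial α 1) = u α := by
  rw [← rieszLinear_apply]
  simpa only [coe_basisMonomials] using! (basisMonomials (Fin n) ℝ).constr_basis ℝ u α

lemma riesz_one (u : (Fin n →₀ ℕ) → ℝ) : riesz u 1 = u 0 :=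
  riesz_monomial u 0

/-- The moment sequence of a measure. -/
noncomputable def moment (ρ : Measure (Fin n → ℝ)) (α : Fin n →₀ ℕ) : ℝ :=
  ∫ x, (∏ i, x i ^ α i) ∂ρ

lemma riesz_moment (hρ : HasExpMoment ρ) (p : MvPolynomial (Fin n) ℝ) :
    riesz (moment ρ) p = ∫ x, eval x p ∂ρ := by
  simp only [eval_eq']
  rw [integral_finsetSum _ fun α _ => (hρ.integrable_prod_pow α).const_mul _]
  simp only [riesz, moment, integral_const_mul]

/-- The constraints of the order-`d` relaxation for an arbitrary reference measure `ρ`: `u` and `v`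
are pseudo-moment sequences of the parts of `ρ` on and off `semialg g`. It unfolds to `Feasible`
when `ρ` is Gaussian; as there, `d - dHalf (g j)` truncates to `0` when `d < dHalf (g j)`. -/
def MomentFeasible (ρ : Measure (Fin n → ℝ)) (g : Fin m → MvPolynomial (Fin n) ℝ) (d : ℕ)
    (u v : (Fin n →₀ ℕ) → ℝ) : Prop :=
  (∀ α : Fin n →₀ ℕ, fdeg α ≤ 2 * d → u α + v α = moment ρ α) ∧
  MomPSD d u ∧ MomPSD d v ∧ ∀ j, LocPSD (d - dHalf (g j)) (g j) u

/-- The value of the order-`d` relaxation for an arbitrary reference measure; it unfolds to `obar`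
when `ρ` is Gaussian. The supremum is the junk value `0` if the objective is unbounded, which cannot
happen once `f.totalDegree ≤ d`. -/
noncomputable def relaxValue (ρ : Measure (Fin n → ℝ)) (g : Fin m → MvPolynomial (Fin n) ℝ) (d : ℕ)
    (f : MvPolynomial (Fin n) ℝ) : ℝ :=
  sSup {r | ∃ u v, MomentFeasible ρ g d u v ∧ r = riesz u f}

-- Expand `0 ≤ L((1 ± p)²)`.
lemma MomPSD.two_mul_abs_riesz_le (hu : MomPSD d u) {p : MvPolynomial (Fin n) ℝ}
    (hp : p.totalDegree ≤ d) : 2 * |riesz u p| ≤ riesz u 1 + riesz u (p ^ 2) := by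
  have hadd := hu (1 + p) ((totalDegree_add _ _).trans (by simpa using hp))
  have hsub := hu (1 - p) ((totalDegree_sub _ _).trans (by simpa using hp))
  rw [show (1 + p) ^ 2 = 1 + (p + p) + p ^ 2 by ring] at hadd
  rw [show (1 - p) ^ 2 = 1 - (p + p) + p ^ 2 by ring] at hsub
  simp only [← rieszLinear_apply, map_add, map_sub] at hadd hsub ⊢
  cases abs_cases (rieszLinear u p) <;> linarith

namespace MomentFeasible

lemma mono (h : MomentFeasible ρ g e u v) (hde : d ≤ e) : MomentFeasible ρ g d u v :=
  ⟨fun α hα => h.1 α (by lia), fun p hp => h.2.1 p (by lia), fun p hp => h.2.2.1 p (by lia),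
    fun j p hp => h.2.2.2 j p (by lia)⟩

lemma riesz_add_riesz (h : MomentFeasible ρ g d u v) {p : MvPolynomial (Fin n) ℝ}
    (hp : p.totalDegree ≤ 2 * d) : riesz u p + riesz v p = riesz (moment ρ) p := by
  simp only [riesz, ← Finset.sum_add_distrib, ← mul_add]
  exact Finset.sum_congr rfl fun α hα => by rw [h.1 α ((le_totalDegree hα).trans hp)]

lemma riesz_sq_le (hρ : HasExpMoment ρ) (h : MomentFeasible ρ g d u v)
    {p : MvPolynomial (Fin n) ℝ} (hp : p.totalDegree ≤ d) :
    riesz u (p ^ 2) ≤ ∫ x, eval x (p ^ 2) ∂ρ := by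
  have hdeg : (p ^ 2).totalDegree ≤ 2 * d := (totalDegree_pow p 2).trans (by lia)
  rw [← riesz_moment hρ, ← h.riesz_add_riesz hdeg]
  exact le_add_of_nonneg_right (h.2.2.1 p hp)

lemma abs_riesz_le (hρ : HasExpMoment ρ) (h : MomentFeasible ρ g d u v)
    {p : MvPolynomial (Fin n) ℝ} (hp : p.totalDegree ≤ d) :
    |riesz u p| ≤ ((∫ x, eval x 1 ∂ρ) + ∫ x, eval x (p ^ 2) ∂ρ) / 2 := by
  have hone : riesz u 1 ≤ ∫ x, eval x 1 ∂ρ := by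
    simpa only [one_pow] using h.riesz_sq_le hρ (p := 1) (by simp)
  linarith [h.2.1.two_mul_abs_riesz_le hp, h.riesz_sq_le hρ hp]

end MomentFeasible

lemma measurableSet_semialg (g : Fin m → MvPolynomial (Fin n) ℝ) : MeasurableSet (semialg g) := by
  simp only [semialg, Set.ofPred_forall]
  exact .iInter fun j => (isClosed_le continuous_const (continuous_eval (g j))).measurableSet

lemma momPSD_moment (hρ : HasExpMoment ρ) (d : ℕ) : MomPSD d (moment ρ) := fun p _ => by
  rw [riesz_moment hρ]
  exact integral_nonneg fun x => by simpa using sq_nonneg (eval x p)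

lemma momentFeasible_moment_restrict (hρ : HasExpMoment ρ) (g : Fin m → MvPolynomial (Fin n) ℝ)
    (d : ℕ) : MomentFeasible ρ g d (moment (ρ.restrict (semialg g)))
      (moment (ρ.restrict (semialg g)ᶜ)) := by
  refine ⟨fun α _ => integral_add_compl (measurableSet_semialg g) (hρ.integrable_prod_pow α),
    momPSD_moment (hρ.restrict _) d, momPSD_moment (hρ.restrict _) d, fun j p _ => ?_⟩
  rw [riesz_moment (hρ.restrict _)]
  refine setIntegral_nonneg (measurableSet_semialg g) fun x hx => ?_
  simpa using mul_nonneg (hx j) (sq_nonneg (eval x p))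

lemma bddAbove_relaxation_values (hρ : HasExpMoment ρ) (g : Fin m → MvPolynomial (Fin n) ℝ)
    {f : MvPolynomial (Fin n) ℝ} (hf : f.totalDegree ≤ d) :
    BddAbove {r | ∃ u v, MomentFeasible ρ g d u v ∧ r = riesz u f} := by
  refine ⟨((∫ x, eval x 1 ∂ρ) + ∫ x, eval x (f ^ 2) ∂ρ) / 2, ?_⟩
  rintro r ⟨u, v, h, rfl⟩
  exact (le_abs_self _).trans (h.abs_riesz_le hρ hf)

lemma setIntegral_le_relaxValue (hρ : HasExpMoment ρ) (g : Fin m → MvPolynomial (Fin n) ℝ)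
    {f : MvPolynomial (Fin n) ℝ} (hf : f.totalDegree ≤ d) :
    ∫ x in semialg g, eval x f ∂ρ ≤ relaxValue ρ g d f := by
  rw [← riesz_moment (hρ.restrict _)]
  exact le_csSup (bddAbove_relaxation_values hρ g hf)
    ⟨_, _, momentFeasible_moment_restrict hρ g d, rfl⟩

lemma exists_sub_lt_riesz (hρ : HasExpMoment ρ) (g : Fin m → MvPolynomial (Fin n) ℝ) (d : ℕ)
    (f : MvPolynomial (Fin n) ℝ) {ε : ℝ} (hε : 0 < ε) :
    ∃ u v, MomentFeasible ρ g d u v ∧ relaxValue ρ g d f - ε < riesz u f := by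
  have hne : {r | ∃ u v, MomentFeasible ρ g d u v ∧ r = riesz u f}.Nonempty :=
    ⟨_, _, _, momentFeasible_moment_restrict hρ g d, rfl⟩
  obtain ⟨_, ⟨u, v, h, rfl⟩, hlt⟩ := exists_lt_of_lt_csSup hne (sub_lt_self _ hε)
  exact ⟨u, v, h, hlt⟩

lemma antitone_relaxValue_one (hρ : HasExpMoment ρ) (g : Fin m → MvPolynomial (Fin n) ℝ) :
    Antitone fun d => relaxValue ρ g d 1 := fun d e hde =>
  csSup_le_csSup (bddAbove_relaxation_values hρ g (by simp))
    ⟨_, _, _, momentFeasible_moment_restrict hρ g e, rfl⟩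
    fun _ ⟨u, v, h, hr⟩ => ⟨u, v, h.mono hde, hr⟩

lemma exists_tendsto_riesz_of_bounded {ι : Type*} {u : ι → (Fin n →₀ ℕ) → ℝ} (U : Ultrafilter ι)
    (hu : ∀ α, ∃ B, ∀ᶠ i in (U : Filter ι), |u i α| ≤ B) :
    ∃ l, ∀ p, Tendsto (fun i => riesz (u i) p) U (𝓝 (riesz l p)) := by
  have hlim (α : Fin n →₀ ℕ) : ∃ a, Tendsto (fun i => u i α) U (𝓝 a) := by
    obtain ⟨B, hB⟩ := hu α
    obtain ⟨a, -, ha⟩ := (isCompact_Icc (a := -B) (b := B)).ultrafilter_le_nhds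
      (U.map fun i => u i α) (le_principal_iff.2 (hB.mono fun _ => abs_le.1))
    exact ⟨a, ha⟩
  choose l hl using hlim
  exact ⟨l, fun p => tendsto_finsetSum _ fun α _ => (hl α).const_mul _⟩

lemma ae_mem_Icc_indicator_semialg (hρ : HasExpMoment ρ) {w : (Fin n → ℝ) → ℝ}
    (hw : MemLp w 2 ρ) (hw_mem : ∀ᵐ x ∂ρ, w x ∈ Set.Icc 0 1)
    (hloc : ∀ j p, 0 ≤ ∫ x, w x * eval x (g j * p ^ 2) ∂ρ) :
    ∀ᵐ x ∂ρ, w x ∈ Set.Icc 0 ((semialg g).indicator 1 x) := by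
  have hsupp (j : Fin m) : ∀ᵐ x ∂ρ, w x ≠ 0 → 0 ≤ eval x (g j) :=
    hρ.ae_eval_nonneg_of_density_ne_zero hw hw_mem (hloc j)
  filter_upwards [hw_mem, ae_all_iff.2 hsupp] with x hx hx_supp
  by_cases hxΩ : x ∈ semialg g
  · simpa only [Set.indicator_of_mem hxΩ, Pi.one_apply] using hx
  · have hwx : w x = 0 := by
      by_contra hne
      exact hxΩ fun j => hx_supp j hne
    simp [hwx, hxΩ]

theorem exists_density_of_momentFeasible (hρ : HasExpMoment ρ) {u v : ℕ → (Fin n →₀ ℕ) → ℝ}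
    {U : Ultrafilter ℕ} (hU : (U : Filter ℕ) ≤ atTop)
    (h : ∀ᶠ d in (U : Filter ℕ), MomentFeasible ρ g d (u d) (v d)) :
    ∃ w : (Fin n → ℝ) → ℝ, MemLp w 2 ρ ∧
      (∀ᵐ x ∂ρ, w x ∈ Set.Icc 0 ((semialg g).indicator 1 x)) ∧
      ∀ p, Tendsto (fun d => riesz (u d) p) U (𝓝 (∫ x, w x * eval x p ∂ρ)) := by
  have hdeg (k : ℕ) : ∀ᶠ d in (U : Filter ℕ), k ≤ d := hU (eventually_ge_atTop k)
  obtain ⟨l, hl⟩ : ∃ l, ∀ p, Tendsto (fun d => riesz (u d) p) U (𝓝 (riesz l p)) := by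
    refine exists_tendsto_riesz_of_bounded U fun α =>
      ⟨((∫ x, eval x 1 ∂ρ) + ∫ x, eval x (monomial α 1 ^ 2) ∂ρ) / 2, ?_⟩
    filter_upwards [h, hdeg (monomial α (1 : ℝ)).totalDegree] with d hd hα
    simpa only [riesz_monomial] using hd.abs_riesz_le hρ hα
  have hpos (p : MvPolynomial (Fin n) ℝ) : 0 ≤ riesz l (p ^ 2) := by
    refine ge_of_tendsto (hl _) ?_
    filter_upwards [h, hdeg p.totalDegree] with d hd hp using hd.2.1 p hp
  have hle (p : MvPolynomial (Fin n) ℝ) : riesz l (p ^ 2) ≤ ∫ x, eval x (p ^ 2) ∂ρ := by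
    refine le_of_tendsto (hl _) ?_
    filter_upwards [h, hdeg p.totalDegree] with d hd hp using hd.riesz_sq_le hρ hp
  have hloc (j : Fin m) (p : MvPolynomial (Fin n) ℝ) : 0 ≤ riesz l (g j * p ^ 2) := by
    refine ge_of_tendsto (hl _) ?_
    filter_upwards [h, hdeg (p.totalDegree + dHalf (g j))] with d hd hp
    exact hd.2.2.2 j p (by lia)
  obtain ⟨w, hw, hw_mem, hlw⟩ := hρ.exists_density (rieszLinear l)
    (by simpa only [rieszLinear_apply] using hpos) (by simpa only [rieszLinear_apply] using hle)
  simp only [← rieszLinear_apply l, hlw] at hl hloc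
  exact ⟨w, hw, ae_mem_Icc_indicator_semialg hρ hw hw_mem hloc, hl⟩

theorem tendsto_riesz_of_nearly_optimal (hρ : HasExpMoment ρ) {f : MvPolynomial (Fin n) ℝ}
    (hf : ∀ᵐ x ∂ρ.restrict (semialg g), 0 < eval x f) {u v : ℕ → (Fin n →₀ ℕ) → ℝ} {ε : ℕ → ℝ}
    (h : ∀ᶠ d in atTop, MomentFeasible ρ g d (u d) (v d)) (hε : Tendsto ε atTop (𝓝 0))
    (hopt : ∀ᶠ d in atTop, (∫ x in semialg g, eval x f ∂ρ) - ε d ≤ riesz (u d) f)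
    (p : MvPolynomial (Fin n) ℝ) :
    Tendsto (fun d => riesz (u d) p) atTop (𝓝 (∫ x in semialg g, eval x p ∂ρ)) := by
  rw [tendsto_iff_ultrafilter]
  intro U hU
  obtain ⟨w, hw, hw_mem, hlim⟩ := exists_density_of_momentFeasible hρ hU (h.filter_mono hU)
  have hge : ∫ x in semialg g, eval x f ∂ρ ≤ ∫ x, w x * eval x f ∂ρ := by
    refine le_of_tendsto_of_tendsto ?_ (hlim f) (hopt.filter_mono hU)
    simpa using (tendsto_const_nhds.sub hε).mono_left hU
  have hw_eq : w =ᵐ[ρ] (semialg g).indicator 1 :=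
    ae_eq_indicator_one_of_setIntegral_le (measurableSet_semialg g)
      (hw.integrable_mul (hρ.memLp_eval f)) (hρ.integrable_eval f).integrableOn hw_mem hf hge
  have hint : ∫ x, w x * eval x p ∂ρ = ∫ x in semialg g, eval x p ∂ρ := by
    rw [← integral_indicator (measurableSet_semialg g)]
    refine integral_congr_ae ?_
    filter_upwards [hw_eq] with x hx
    rw [hx, ← Set.indicator_mul_left (semialg g) 1 fun x => eval x p, Pi.one_def]
    simp
  exact hint ▸ hlim p

theorem tendsto_relaxValue (hρ : HasExpMoment ρ) {f : MvPolynomial (Fin n) ℝ}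
    (hf : ∀ᵐ x ∂ρ.restrict (semialg g), 0 < eval x f) :
    Tendsto (fun d => relaxValue ρ g d f) atTop (𝓝 (∫ x in semialg g, eval x f ∂ρ)) := by
  have hε : Tendsto (fun d : ℕ => 1 / ((d : ℝ) + 1)) atTop (𝓝 0) :=
    tendsto_one_div_add_atTop_nhds_zero_nat
  choose u v hfeas hnear using fun d : ℕ =>
    exists_sub_lt_riesz hρ g d f (ε := 1 / ((d : ℝ) + 1)) (by positivity)
  have hlow : ∀ᶠ d in atTop, ∫ x in semialg g, eval x f ∂ρ ≤ relaxValue ρ g d f :=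
    (eventually_ge_atTop f.totalDegree).mono fun d => setIntegral_le_relaxValue hρ g
  have hup (d : ℕ) : relaxValue ρ g d f ≤ riesz (u d) f + 1 / ((d : ℝ) + 1) := by
    linarith [hnear d]
  have hlim := tendsto_riesz_of_nearly_optimal hρ hf (.of_forall hfeas) hε
    (hlow.mono fun d hd => by linarith [hup d]) f
  exact tendsto_of_tendsto_of_tendsto_of_le_of_le' tendsto_const_nhds
    (by simpa only [add_zero] using hlim.add hε) hlow (.of_forall hup)

theorem tendsto_riesz_of_optimal (hρ : HasExpMoment ρ) {f : MvPolynomial (Fin n) ℝ}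
    (hf : ∀ᵐ x ∂ρ.restrict (semialg g), 0 < eval x f) {u v : ℕ → (Fin n →₀ ℕ) → ℝ}
    (h : ∀ᶠ d in atTop,
      MomentFeasible ρ g d (u d) (v d) ∧ riesz (u d) f = relaxValue ρ g d f)
    (p : MvPolynomial (Fin n) ℝ) :
    Tendsto (fun d => riesz (u d) p) atTop (𝓝 (∫ x in semialg g, eval x p ∂ρ)) := by
  refine tendsto_riesz_of_nearly_optimal hρ hf (h.mono fun _ => And.left)
    (tendsto_const_nhds (x := (0 : ℝ))) ?_ p
  filter_upwards [h, eventually_ge_atTop f.totalDegree] with d hd hdeg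
  rw [sub_zero, hd.2]
  exact setIntegral_le_relaxValue hρ g hdeg

end Relaxation

lemma hasExpMoment_gaussianMeasure (n : ℕ) : HasExpMoment (gaussianMeasure n) := by
  refine ⟨1, one_pos, ?_⟩
  rw [gaussianMeasure, integrable_withDensity_iff_integrable_smul' (by fun_prop) (by simp)]
  have hprod : Integrable (fun x : Fin n → ℝ => ∏ i, Real.exp (-(1 / 4) * x i ^ 2)) :=
    .fintype_prod (f := fun _ t => Real.exp (-(1 / 4) * t ^ 2))
      fun _ => integrable_exp_neg_mul_sq (by norm_num)
  refine (hprod.const_mul ((2 * Real.pi) ^ (-(n : ℝ) / 2) * Real.exp 1)).mono'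
    (by fun_prop) (.of_forall fun x => ?_)
  have hnorm : ‖x‖ ^ 2 ≤ ∑ i, x i ^ 2 := by
    rw [← Real.le_sqrt (norm_nonneg _) (by positivity), pi_norm_le_iff_of_nonneg (by positivity)]
    exact fun i => Real.abs_le_sqrt
      (Finset.single_le_sum (f := fun i => x i ^ 2) (fun _ _ => sq_nonneg _) (Finset.mem_univ i))
  rw [ENNReal.toReal_ofReal (by positivity), smul_eq_mul, Real.norm_of_nonneg (by positivity),
    ← Real.exp_sum, ← Finset.mul_sum, mul_assoc, mul_assoc, ← Real.exp_add, ← Real.exp_add]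
  refine mul_le_mul_of_nonneg_left (Real.exp_le_exp.2 ?_) (by positivity)
  nlinarith [sq_nonneg (1 - ‖x‖ / 2)]

theorem stmt9_general {n m : ℕ} {ρ : Measure (Fin n → ℝ)} (hρ : HasExpMoment ρ)
    (g : Fin m → MvPolynomial (Fin n) ℝ) (f : MvPolynomial (Fin n) ℝ)
    (hf : ∀ᵐ x ∂ρ.restrict (semialg g), 0 < eval x f) :
    Tendsto (fun d => relaxValue ρ g d f) atTop (𝓝 (∫ x in semialg g, eval x f ∂ρ)) ∧
    (∀ u v : ℕ → (Fin n →₀ ℕ) → ℝ,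
      (∀ᶠ d in atTop, MomentFeasible ρ g d (u d) (v d) ∧ riesz (u d) f = relaxValue ρ g d f) →
      Tendsto (fun d => u d 0) atTop (𝓝 (ρ (semialg g)).toReal)) ∧
    Antitone (fun d => relaxValue ρ g d 1) ∧
    Tendsto (fun d => relaxValue ρ g d 1) atTop (𝓝 (ρ (semialg g)).toReal) := by
  have hvol : ∫ x in semialg g, eval x (1 : MvPolynomial (Fin n) ℝ) ∂ρ =
      (ρ (semialg g)).toReal := by simp [Measure.real]
  refine ⟨tendsto_relaxValue hρ hf, fun u v h => ?_, antitone_relaxValue_one hρ g, ?_⟩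
  · simpa only [riesz_one, hvol] using tendsto_riesz_of_optimal hρ hf h 1
  · simpa only [hvol] using tendsto_relaxValue (g := g) (f := 1) hρ (by simp)

/-- for the Gaussian measure, `Ω = {x : g_j(x) ≥ 0}` with `Ω` and `ℝⁿ∖Ω` of
nonempty interior, and `f` strictly positive a.e. on `Ω`: `ō_d(f) → ∫_Ω f dμ`; any choice of
optimal solutions `(u^d, v^d)` (for `d ≥ d₀`) satisfies `u^d_0 → μ(Ω)`; and for `f = 1` the
sequence `(ō_d(1))` is monotone non-increasing and converges to `μ(Ω)`. -/
theorem stmt9 {n m : ℕ} (g : Fin m → MvPolynomial (Fin n) ℝ)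
    (hΩ : (interior (semialg g)).Nonempty)
    (hΩc : (interior ((semialg g)ᶜ)).Nonempty)
    (f : MvPolynomial (Fin n) ℝ)
    (hf : ∀ᵐ x ∂(gaussianMeasure n).restrict (semialg g), 0 < eval x f)
    (d0 : ℕ) (hd0 : ∀ j, dHalf (g j) ≤ d0) :
    Tendsto (fun d => obar g d f) atTop
      (𝓝 (∫ x in semialg g, eval x f ∂gaussianMeasure n)) ∧
    (∀ u v : ℕ → ((Fin n →₀ ℕ) → ℝ),
      (∀ d, d0 ≤ d → Feasible g d (u d) (v d) ∧ riesz (u d) f = obar g d f) →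
      Tendsto (fun d => u d 0) atTop (𝓝 (gaussianMeasure n (semialg g)).toReal)) ∧
    (∀ d, d0 ≤ d → obar g (d + 1) 1 ≤ obar g d 1) ∧
    Tendsto (fun d => obar g d 1) atTop (𝓝 (gaussianMeasure n (semialg g)).toReal) := by
  obtain ⟨hlim, hopt, hanti, hvol⟩ := stmt9_general (hasExpMoment_gaussianMeasure n) g f hf
  exact ⟨hlim, fun u v h => hopt u v (eventually_atTop.2 ⟨d0, h⟩), fun d _ => hanti d.le_succ, hvol⟩
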